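/- Let P be a Beta(k, M-k+1) random variable, δ ∈ (2/3, 1), p_k = √6/k^{δ/2}, and let E_β = ((k-1)/M)^β·(P^{-β} - E[P^{-β}]) for a real β with 0 < β < k/q for a positive integer q. Then on the event {(1-p_k)(k-1)/M < P < (1+p_k)(k-1)/M}, |E_β| = O(k^{-δ/2}) deterministically, and E[E_β^q] = O(k^{-δq/2}) + O(e^{-3k^{1-δ}}). -/

import Mathlib

open MeasureTheory Filter Asymptotics

/-!
Let `x = (k - 1) / M` be the mode of `Beta(k, M - k + 1)` and `T = P / x`, so that
`E_β = T ^ (-β) - E[T ^ (-β)]`. By the mean value theorem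
`|T ^ s - 1| ≤ |s| * (1 + T ^ (s - 1)) * |T - 1|` for every real `s`. The recurrence
`Γ(z + 1) = z * Γ(z)` bounds `E[T ^ u]` for each fixed real `u` as `k → ∞`, and Stein's identity for
the Beta distribution gives `E[(T - 1) ^ (2 * r)] = O(k ^ (-r))` by induction on `r`. Young's
inequality with weight `k ^ (q / 2)` combines the two into `E[|T ^ s - 1| ^ q] = O(k ^ (-q / 2))`,
and the case `q = 1` allows `1` to be replaced by `E[T ^ s]`. On the event, `|T - 1|` is at most
`√6 * k ^ (-δ / 2)`, which dominates the order `k ^ (-1 / 2)` of the fluctuations because `δ ≤ 1`;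
hence no exponential correction is needed.
-/

section RealPowers

theorem rpow_le_one_add_rpow_of_mem_uIcc {t x : ℝ} (ht : 0 < t) (hx : x ∈ Set.uIcc 1 t) (s : ℝ) :
    x ^ s ≤ 1 + t ^ s := by
  have hts : 0 < t ^ s := Real.rpow_pos_of_pos ht s
  have hx0 : 0 < x := (lt_min one_pos ht).trans_le hx.1
  rcases le_total 0 s with hs | hs
  · rcases le_max_iff.mp hx.2 with h | h
    · linarith [Real.rpow_le_one hx0.le h hs]
    · linarith [Real.rpow_le_rpow hx0.le h hs]
  · rcases min_le_iff.mp hx.1 with h | h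
    · linarith [Real.rpow_le_one_of_one_le_of_nonpos h hs]
    · linarith [Real.rpow_le_rpow_of_nonpos ht h hs]

theorem abs_rpow_sub_one_le {t : ℝ} (ht : 0 < t) (s : ℝ) :
    |t ^ s - 1| ≤ |s| * (1 + t ^ (s - 1)) * |t - 1| := by
  have hpos : ∀ x ∈ Set.uIcc 1 t, 0 < x := fun x hx => (lt_min one_pos ht).trans_le hx.1
  have hderiv : ∀ x ∈ Set.uIcc 1 t,
      HasDerivWithinAt (fun x : ℝ => x ^ s) (s * x ^ (s - 1)) (Set.uIcc 1 t) x := fun x hx =>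
    (Real.hasDerivAt_rpow_const (.inl (hpos x hx).ne')).hasDerivWithinAt
  have hbound : ∀ x ∈ Set.uIcc 1 t, ‖s * x ^ (s - 1)‖ ≤ |s| * (1 + t ^ (s - 1)) := by
    intro x hx
    rw [norm_mul, Real.norm_eq_abs, Real.norm_of_nonneg (Real.rpow_nonneg (hpos x hx).le _)]
    gcongr
    exact rpow_le_one_add_rpow_of_mem_uIcc ht hx _
  simpa using (convex_uIcc 1 t).norm_image_sub_le_of_norm_hasDerivWithin_le hderiv hbound
    Set.left_mem_uIcc Set.right_mem_uIcc

theorem rpow_le_two_rpow_abs {t : ℝ} (ht : |t - 1| ≤ 1 / 2) (s : ℝ) : t ^ s ≤ 2 ^ |s| := by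
  obtain ⟨hlo, hhi⟩ := abs_le.mp ht
  have ht0 : 0 < t := by linarith
  rcases le_total 0 s with hs | hs
  · rw [abs_of_nonneg hs]
    exact Real.rpow_le_rpow ht0.le (by linarith) hs
  · rw [abs_of_nonpos hs, Real.rpow_neg zero_le_two, ← Real.inv_rpow zero_le_two]
    exact Real.rpow_le_rpow_of_nonpos (by norm_num) (by linarith) hs

theorem rpow_le_rpow_natCast_add_rpow_neg_natCast {t s : ℝ} (ht : 0 < t) {n : ℕ} (hs : |s| ≤ n) :
    t ^ s ≤ t ^ (n : ℝ) + t ^ (-n : ℝ) := by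
  obtain ⟨hlo, hhi⟩ := abs_le.mp hs
  have hpos : 0 < t ^ (n : ℝ) := Real.rpow_pos_of_pos ht _
  have hneg : 0 < t ^ (-n : ℝ) := Real.rpow_pos_of_pos ht _
  rcases le_total 1 t with h | h
  · linarith [Real.rpow_le_rpow_of_exponent_le h hhi]
  · linarith [Real.rpow_le_rpow_of_exponent_ge ht h hlo]

theorem one_add_mul_pow_le {L v w : ℝ} (hL : 0 < L) (hv : 0 ≤ v) (hw : 0 ≤ w) (q : ℕ) :
    ((1 + w) * v) ^ q ≤ L * v ^ (2 * q) + 2 ^ (2 * q) * (1 + w ^ (2 * q)) / L := by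
  have hyoung : (1 + w) ^ q * v ^ q ≤ L * (v ^ q) ^ 2 + ((1 + w) ^ q) ^ 2 / L := by
    have hsq : 0 ≤ (L * v ^ q - (1 + w) ^ q) ^ 2 / L := by positivity
    have hexpand : (L * v ^ q - (1 + w) ^ q) ^ 2 / L =
        L * (v ^ q) ^ 2 + ((1 + w) ^ q) ^ 2 / L - 2 * ((1 + w) ^ q * v ^ q) := by
      field_simp
      ring
    have hnonneg : 0 ≤ (1 + w) ^ q * v ^ q := by positivity
    linarith
  have hpow : (1 + w) ^ (2 * q) ≤ 2 ^ (2 * q) * (1 + w ^ (2 * q)) := by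
    refine (add_pow_le zero_le_one hw _).trans ?_
    rw [one_pow]
    gcongr
    · norm_num
    · exact Nat.sub_le _ _
  rw [← pow_mul, ← pow_mul, mul_comm q 2] at hyoung
  rw [mul_pow]
  exact hyoung.trans (by gcongr)

theorem one_div_sqrt_le_rpow_neg_div_two {t δ : ℝ} (ht : 1 ≤ t) (hδ : δ ≤ 1) :
    1 / √t ≤ t ^ (-δ / 2) := by
  rw [Real.sqrt_eq_rpow, one_div, ← Real.rpow_neg (by linarith)]
  exact Real.rpow_le_rpow_of_exponent_le ht (by linarith)

end RealPowers

section BetaMeasure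

open ProbabilityTheory Set

variable {a b : ℝ}

theorem betaMeasure_eq_withDensity_restrict (a b : ℝ) :
    betaMeasure a b = (volume.restrict (Ioo 0 1)).withDensity
      fun p => ENNReal.ofReal (p ^ (a - 1) * (1 - p) ^ (b - 1) / beta a b) := by
  rw [betaMeasure, ← withDensity_indicator measurableSet_Ioo]
  congr 1
  ext p
  rw [betaPDF_eq, indicator_apply]
  simp only [mem_Ioo]
  split_ifs
  · congr 1
    ring
  · exact ENNReal.ofReal_zero

theorem ae_mem_Ioo_betaMeasure (a b : ℝ) : ∀ᵐ p ∂betaMeasure a b, p ∈ Ioo 0 1 := by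
  rw [betaMeasure_eq_withDensity_restrict]
  exact withDensity_absolutelyContinuous _ _ (ae_restrict_mem measurableSet_Ioo)

theorem beta_weight_smul_eqOn (ha : 0 < a) (hb : 0 < b) (f : ℝ → ℝ) :
    EqOn (fun p => (ENNReal.ofReal (p ^ (a - 1) * (1 - p) ^ (b - 1) / beta a b)).toReal • f p)
      (fun p => f p * (p ^ (a - 1) * (1 - p) ^ (b - 1) / beta a b)) (Ioo 0 1) := by
  intro p hp
  have hp0 : 0 ≤ p := hp.1.le
  have hp1 : 0 ≤ 1 - p := sub_nonneg.mpr hp.2.le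
  have hB := beta_pos ha hb
  simp only
  rw [ENNReal.toReal_ofReal (by positivity), smul_eq_mul, mul_comm]

theorem integral_betaMeasure (ha : 0 < a) (hb : 0 < b) (f : ℝ → ℝ) :
    ∫ p, f p ∂betaMeasure a b =
      ∫ p in Ioo 0 1, f p * (p ^ (a - 1) * (1 - p) ^ (b - 1) / beta a b) := by
  rw [betaMeasure_eq_withDensity_restrict, integral_withDensity_eq_integral_toReal_smul
    (by fun_prop) (.of_forall fun _ => ENNReal.ofReal_lt_top)]
  exact setIntegral_congr_fun measurableSet_Ioo (beta_weight_smul_eqOn ha hb f)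

theorem integrable_betaMeasure_iff (ha : 0 < a) (hb : 0 < b) {f : ℝ → ℝ} :
    Integrable f (betaMeasure a b) ↔
      IntegrableOn (fun p => f p * (p ^ (a - 1) * (1 - p) ^ (b - 1) / beta a b)) (Ioo 0 1) := by
  rw [betaMeasure_eq_withDensity_restrict, integrable_withDensity_iff_integrable_smul'
    (by fun_prop) (.of_forall fun _ => ENNReal.ofReal_lt_top)]
  exact integrableOn_congr_fun (beta_weight_smul_eqOn ha hb f) measurableSet_Ioo

theorem integrable_betaMeasure_of_continuous (ha : 0 < a) (hb : 0 < b) {f : ℝ → ℝ}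
    (hf : Continuous f) : Integrable f (betaMeasure a b) := by
  have := isProbabilityMeasureBeta ha hb
  obtain ⟨C, hC⟩ := isCompact_Icc.exists_bound_of_continuousOn (s := Icc (0 : ℝ) 1) hf.continuousOn
  refine .of_bound hf.aestronglyMeasurable C ?_
  filter_upwards [ae_mem_Ioo_betaMeasure a b] with p hp using hC p (Ioo_subset_Icc_self hp)

theorem rpow_mul_beta_weight_eqOn (ha : 0 < a) (hb : 0 < b) {s : ℝ} (hs : 0 < a + s) :
    EqOn (fun p => p ^ s * (p ^ (a - 1) * (1 - p) ^ (b - 1) / beta a b))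
      (fun p => beta (a + s) b / beta a b *
        (1 * (p ^ (a + s - 1) * (1 - p) ^ (b - 1) / beta (a + s) b))) (Ioo 0 1) := by
  intro p hp
  have hB := (beta_pos ha hb).ne'
  have hBs := (beta_pos hs hb).ne'
  simp only
  rw [show a + s - 1 = s + (a - 1) by ring, Real.rpow_add hp.1]
  field_simp

theorem integrable_rpow_betaMeasure (ha : 0 < a) (hb : 0 < b) {s : ℝ} (hs : 0 < a + s) :
    Integrable (fun p => p ^ s) (betaMeasure a b) := by
  have hone : Integrable (fun _ => (1 : ℝ)) (betaMeasure (a + s) b) :=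
    integrable_betaMeasure_of_continuous hs hb continuous_const
  rw [integrable_betaMeasure_iff ha hb, integrableOn_congr_fun (rpow_mul_beta_weight_eqOn ha hb hs)
    measurableSet_Ioo]
  exact ((integrable_betaMeasure_iff hs hb).mp hone).const_mul _

theorem integral_rpow_betaMeasure (ha : 0 < a) (hb : 0 < b) {s : ℝ} (hs : 0 < a + s) :
    ∫ p, p ^ s ∂betaMeasure a b = beta (a + s) b / beta a b := by
  have := isProbabilityMeasureBeta hs hb
  rw [integral_betaMeasure ha hb, setIntegral_congr_fun measurableSet_Ioo
    (rpow_mul_beta_weight_eqOn ha hb hs), integral_const_mul,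
    ← integral_betaMeasure hs hb fun _ => 1]
  simp

theorem beta_add_one_left (ha : 0 < a) (hb : 0 < b) :
    beta (a + 1) b = a / (a + b) * beta a b := by
  have hab := add_pos ha hb
  have hG := (Real.Gamma_pos_of_pos hab).ne'
  rw [beta, beta, show a + 1 + b = a + b + 1 by ring, Real.Gamma_add_one ha.ne',
    Real.Gamma_add_one hab.ne']
  field_simp

theorem hasDerivAt_rpow_mul_one_sub_rpow_mul {p f' : ℝ} (hp : p ∈ Ioo 0 1) {f : ℝ → ℝ}
    (hf : HasDerivAt f f' p) (a b : ℝ) :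
    HasDerivAt (fun p => p ^ a * (1 - p) ^ b * f p)
      ((p * (1 - p) * f' - ((a + b) * p - a) * f p) * (p ^ (a - 1) * (1 - p) ^ (b - 1))) p := by
  have hp1 : 0 < 1 - p := sub_pos.mpr hp.2
  have hleft := (hasDerivAt_id p).rpow_const (p := a) (.inl hp.1.ne')
  have hright := ((hasDerivAt_id p).const_sub 1).rpow_const (p := b) (.inl hp1.ne')
  have hpa : p ^ a = p ^ (a - 1) * p := by rw [← Real.rpow_add_one hp.1.ne', sub_add_cancel]
  have hpb : (1 - p) ^ b = (1 - p) ^ (b - 1) * (1 - p) := by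
    rw [← Real.rpow_add_one hp1.ne', sub_add_cancel]
  refine ((hleft.mul hright).mul hf).congr_deriv ?_
  simp only [id, hpa, hpb, Pi.mul_apply]
  ring

theorem integral_stein_betaMeasure (ha : 0 < a) (hb : 0 < b) {f f' : ℝ → ℝ}
    (hf : ∀ p, HasDerivAt f (f' p) p) (hf' : Continuous f') :
    ∫ p, p * (1 - p) * f' p ∂betaMeasure a b = ∫ p, ((a + b) * p - a) * f p ∂betaMeasure a b := by
  have hfc : Continuous f := continuous_iff_continuousAt.mpr fun p => (hf p).continuousAt
  set g : ℝ → ℝ := fun p => p * (1 - p) * f' p - ((a + b) * p - a) * f p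
  have hg_int : Integrable g (betaMeasure a b) :=
    integrable_betaMeasure_of_continuous ha hb (by fun_prop)
  set F : ℝ → ℝ := fun p => p ^ a * (1 - p) ^ b * f p / beta a b with hF
  have hF_cont : Continuous F := by
    refine ((Continuous.mul ?_ ?_).mul hfc).div_const _
    · exact continuous_id.rpow_const fun _ => .inr ha.le
    · exact (continuous_sub_left 1).rpow_const fun _ => .inr hb.le
  have hF_deriv : ∀ p ∈ Ioo (0 : ℝ) 1,
      HasDerivAt F (g p * (p ^ (a - 1) * (1 - p) ^ (b - 1) / beta a b)) p := fun p hp =>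
    ((hasDerivAt_rpow_mul_one_sub_rpow_mul hp (hf p) a b).div_const _).congr_deriv
      (mul_div_assoc _ _ _)
  have hFTC : ∫ p, g p ∂betaMeasure a b = F 1 - F 0 := by
    rw [integral_betaMeasure ha hb, ← integral_Ioc_eq_integral_Ioo,
      ← intervalIntegral.integral_of_le zero_le_one]
    refine intervalIntegral.integral_eq_sub_of_hasDerivAt_of_le zero_le_one hF_cont.continuousOn
      hF_deriv ?_
    rw [intervalIntegrable_iff_integrableOn_Ioo_of_le zero_le_one]
    exact (integrable_betaMeasure_iff ha hb).mp hg_int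
  have hboundary : F 1 - F 0 = 0 := by simp [hF, Real.zero_rpow ha.ne', Real.zero_rpow hb.ne']
  rw [← sub_eq_zero, ← integral_sub (integrable_betaMeasure_of_continuous ha hb (by fun_prop))
    (integrable_betaMeasure_of_continuous ha hb (by fun_prop)), hFTC, hboundary]

end BetaMeasure

section Mode

open ProbabilityTheory Set

/-- The mode of the distribution `Beta(a, b)`; for `Beta(k, M - k + 1)` it is `(k - 1) / M`. -/
noncomputable def betaMode (a b : ℝ) : ℝ := (a - 1) / (a + b - 1)

variable {a b : ℝ}

theorem betaMode_pos (ha : 1 < a) (hb : 0 < b) : 0 < betaMode a b :=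
  div_pos (by linarith) (by linarith)

theorem betaMode_le_one (ha : 1 < a) (hb : 0 < b) : betaMode a b ≤ 1 :=
  (div_le_one (by linarith)).mpr (by linarith)

theorem div_rpow_ae_eq_betaMeasure {c : ℝ} (hc : 0 ≤ c) (a b s : ℝ) :
    (fun p => (p / c) ^ s) =ᵐ[betaMeasure a b] fun p => p ^ s / c ^ s := by
  filter_upwards [ae_mem_Ioo_betaMeasure a b] with p hp using Real.div_rpow hp.1.le hc s

theorem integrable_div_rpow_betaMeasure {c s : ℝ} (hc : 0 ≤ c) (ha : 0 < a) (hb : 0 < b)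
    (hs : 0 < a + s) : Integrable (fun p => (p / c) ^ s) (betaMeasure a b) :=
  ((integrable_rpow_betaMeasure ha hb hs).div_const _).congr
    (div_rpow_ae_eq_betaMeasure hc a b s).symm

theorem integral_div_rpow_betaMeasure {c s : ℝ} (hc : 0 ≤ c) (ha : 0 < a) (hb : 0 < b)
    (hs : 0 < a + s) :
    ∫ p, (p / c) ^ s ∂betaMeasure a b = beta (a + s) b / beta a b / c ^ s := by
  rw [integral_congr_ae (div_rpow_ae_eq_betaMeasure hc a b s), integral_div,
    integral_rpow_betaMeasure ha hb hs]

theorem integral_div_betaMode_rpow_nonneg (ha : 1 < a) (hb : 0 < b) (s : ℝ) :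
    0 ≤ ∫ p, (p / betaMode a b) ^ s ∂betaMeasure a b := by
  refine integral_nonneg_of_ae ?_
  filter_upwards [ae_mem_Ioo_betaMeasure a b] with p hp
  exact Real.rpow_nonneg (div_nonneg hp.1.le (betaMode_pos ha hb).le) s

theorem integral_div_betaMode_rpow_add_one {s : ℝ} (ha : 1 < a) (hb : 0 < b) (hs : 0 < a + s) :
    (a - 1) * (a + b + s) * ∫ p, (p / betaMode a b) ^ (s + 1) ∂betaMeasure a b =
      (a + b - 1) * (a + s) * ∫ p, (p / betaMode a b) ^ s ∂betaMeasure a b := by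
  have hx := betaMode_pos ha hb
  have hmode : betaMode a b * (a + b - 1) = a - 1 := div_mul_cancel₀ _ (by linarith)
  have hB := beta_pos (by linarith : 0 < a) hb
  have habs : a + s + b ≠ 0 := by linarith
  rw [integral_div_rpow_betaMeasure hx.le (by linarith) hb (by linarith),
    integral_div_rpow_betaMeasure hx.le (by linarith) hb hs, ← add_assoc,
    beta_add_one_left hs hb, Real.rpow_add_one hx.ne', ← hmode]
  field_simp
  ring

theorem integral_div_betaMode_rpow_add_one_le {s : ℝ} (ha : 1 < a) (hb : 0 < b)
    (hs : 2 * |s + 1| ≤ a - 1) :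
    ∫ p, (p / betaMode a b) ^ (s + 1) ∂betaMeasure a b ≤
      2 * ∫ p, (p / betaMode a b) ^ s ∂betaMeasure a b := by
  obtain ⟨hlo, hhi⟩ := abs_le.mp (show |s + 1| ≤ (a - 1) / 2 by linarith)
  have hrec := integral_div_betaMode_rpow_add_one ha hb (s := s) (by linarith)
  have hI := integral_div_betaMode_rpow_nonneg ha hb s
  have hcoef : (a + b - 1) * (a + s) ≤ (a - 1) * (a + b + s) * 2 := by nlinarith
  have hpos : 0 < (a - 1) * (a + b + s) := mul_pos (by linarith) (by linarith)
  refine le_of_mul_le_mul_left ?_ hpos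
  rw [hrec, ← mul_assoc]
  gcongr

theorem integral_div_betaMode_rpow_le {s : ℝ} (ha : 1 < a) (hb : 0 < b)
    (hs : 2 * |s + 1| ≤ a - 1) :
    ∫ p, (p / betaMode a b) ^ s ∂betaMeasure a b ≤
      2 * ∫ p, (p / betaMode a b) ^ (s + 1) ∂betaMeasure a b := by
  have hlo := (abs_le.mp (show |s + 1| ≤ (a - 1) / 2 by linarith)).1
  have hrec := integral_div_betaMode_rpow_add_one ha hb (s := s) (by linarith)
  have hI := integral_div_betaMode_rpow_nonneg ha hb (s + 1)
  have hcoef : (a - 1) * (a + b + s) ≤ (a + b - 1) * (a + s) * 2 := by nlinarith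
  have hpos : 0 < (a + b - 1) * (a + s) := mul_pos (by linarith) (by linarith)
  refine le_of_mul_le_mul_left ?_ hpos
  rw [← hrec, ← mul_assoc]
  gcongr

theorem integral_div_betaMode_rpow_natCast_le (ha : 1 < a) (hb : 0 < b) {n : ℕ}
    (hn : 2 * n ≤ a - 1) :
    ∫ p, (p / betaMode a b) ^ (n : ℝ) ∂betaMeasure a b ≤ 2 ^ n := by
  have := isProbabilityMeasureBeta (by linarith : 0 < a) hb
  induction n with
  | zero => simp
  | succ n ih =>
    push_cast at hn ⊢
    rw [pow_succ']
    have hstep := integral_div_betaMode_rpow_add_one_le ha hb (s := n)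
      (by rwa [abs_of_nonneg (by positivity)])
    exact hstep.trans (by gcongr; exact ih (by linarith))

theorem integral_div_betaMode_rpow_neg_natCast_le (ha : 1 < a) (hb : 0 < b) {n : ℕ}
    (hn : 2 * n ≤ a - 1) :
    ∫ p, (p / betaMode a b) ^ (-n : ℝ) ∂betaMeasure a b ≤ 2 ^ n := by
  have := isProbabilityMeasureBeta (by linarith : 0 < a) hb
  induction n with
  | zero => simp
  | succ n ih =>
    push_cast at hn ⊢
    have hshift : -((n : ℝ) + 1) + 1 = -n := by ring
    have hstep := integral_div_betaMode_rpow_le ha hb (s := -((n : ℝ) + 1))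
      (by rw [hshift, abs_neg, Nat.abs_cast]; linarith)
    rw [hshift] at hstep
    rw [pow_succ']
    exact hstep.trans (by gcongr; exact ih (by linarith))

theorem exists_integral_div_betaMode_rpow_le (s : ℝ) :
    ∃ C K : ℝ, ∀ a b : ℝ, K ≤ a → 0 < b →
      ∫ p, (p / betaMode a b) ^ s ∂betaMeasure a b ≤ C := by
  obtain ⟨n, hn⟩ := exists_nat_ge |s|
  refine ⟨2 ^ n + 2 ^ n, 2 * n + 2, fun a b ha hb => ?_⟩
  have ha1 : 1 < a := by linarith [n.cast_nonneg (α := ℝ)]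
  have hx := betaMode_pos ha1 hb
  have hint : ∀ u : ℝ, |u| ≤ n → Integrable (fun p => (p / betaMode a b) ^ u) (betaMeasure a b) :=
    fun u hu => integrable_div_rpow_betaMeasure hx.le (by linarith) hb
      (by linarith [neg_abs_le u, abs_nonneg u])
  have hint_pos := hint n (Nat.abs_cast n).le
  have hint_neg := hint (-n) (by rw [abs_neg, Nat.abs_cast])
  calc ∫ p, (p / betaMode a b) ^ s ∂betaMeasure a b
      ≤ ∫ p, ((p / betaMode a b) ^ (n : ℝ) + (p / betaMode a b) ^ (-n : ℝ)) ∂betaMeasure a b := by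
        refine integral_mono_ae (hint s hn) (hint_pos.add hint_neg) ?_
        filter_upwards [ae_mem_Ioo_betaMeasure a b] with p hp
        exact rpow_le_rpow_natCast_add_rpow_neg_natCast (div_pos hp.1 hx) hn
    _ = ∫ p, (p / betaMode a b) ^ (n : ℝ) ∂betaMeasure a b +
          ∫ p, (p / betaMode a b) ^ (-n : ℝ) ∂betaMeasure a b := integral_add hint_pos hint_neg
    _ ≤ 2 ^ n + 2 ^ n := add_le_add
        (integral_div_betaMode_rpow_natCast_le ha1 hb (by linarith))
        (integral_div_betaMode_rpow_neg_natCast_le ha1 hb (by linarith))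

/-- The moment of order `r` of the relative deviation `P / x - 1` from the mode `x`, for
`P ~ Beta(a, b)`. -/
noncomputable def betaModeMoment (a b : ℝ) (r : ℕ) : ℝ :=
  ∫ p, (p / betaMode a b - 1) ^ r ∂betaMeasure a b

theorem betaModeMoment_even_nonneg (a b : ℝ) (r : ℕ) : 0 ≤ betaModeMoment a b (2 * r) :=
  integral_nonneg fun _ => (even_two_mul r).pow_nonneg _

theorem one_sub_mul_add_le {x v p : ℝ} (hx0 : 0 < x) (hx1 : x ≤ 1) (hp : 0 ≤ p)
    (hv : 0 ≤ 1 + v) (r : ℕ) :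
    (1 - x) * v + (2 * r + 1) * ((1 + v) * (1 - p)) ≤ 3 * r + 2 + (r + 1) * v ^ 2 := by
  have hlin : (1 - x) * v ≤ (1 + v ^ 2) / 2 := by nlinarith [sq_nonneg (v - 1), sq_nonneg v]
  have hquad : (1 + v) * (1 - p) ≤ (3 + v ^ 2) / 2 := by
    nlinarith [sq_nonneg (v - 1), mul_nonneg hv hp]
  have hr : (0 : ℝ) ≤ 2 * r + 1 := by positivity
  nlinarith [mul_le_mul_of_nonneg_left hquad hr]

theorem stein_integrand_le {x p : ℝ} (hx0 : 0 < x) (hx1 : x ≤ 1) (hp : 0 ≤ p)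
    (hmode : (a + b) * x - a = x - 1) (r : ℕ) :
    p * (1 - p) * ((2 * r + 1) * (p / x - 1) ^ (2 * r) / x) -
        ((a + b) * p - a) * (p / x - 1) ^ (2 * r + 1) ≤
      (3 * r + 2) * (p / x - 1) ^ (2 * r) - (a - r - 2) * (p / x - 1) ^ (2 * (r + 1)) := by
  obtain ⟨v, rfl⟩ : ∃ v, p = x * (1 + v) := ⟨p / x - 1, by field_simp; ring⟩
  have hv : x * (1 + v) / x - 1 = v := by field_simp; ring
  have hpow : 0 ≤ v ^ (2 * r) := (even_two_mul r).pow_nonneg v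
  have hle := mul_le_mul_of_nonneg_left
    (one_sub_mul_add_le hx0 hx1 hp (nonneg_of_mul_nonneg_right hp hx0) r) hpow
  have hslack : 0 ≤ x * v ^ 2 * v ^ (2 * r) := by positivity
  have hsplit : ((3 * r + 2) * v ^ (2 * r) - (a - r - 2) * v ^ (2 * (r + 1))) -
      (x * (1 + v) * (1 - x * (1 + v)) * ((2 * r + 1) * v ^ (2 * r) / x) -
        ((a + b) * (x * (1 + v)) - a) * v ^ (2 * r + 1)) =
      v ^ (2 * r) * (3 * r + 2 + (r + 1) * v ^ 2) -
        v ^ (2 * r) * ((1 - x) * v + (2 * r + 1) * ((1 + v) * (1 - x * (1 + v)))) +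
        x * v ^ 2 * v ^ (2 * r) := by
    field_simp
    linear_combination (v ^ (2 * r) * (v + v ^ 2)) * hmode
  rw [hv]
  linarith

theorem betaModeMoment_even_succ_le (ha : 1 < a) (hb : 0 < b) (r : ℕ) :
    (a - r - 2) * betaModeMoment a b (2 * (r + 1)) ≤ (3 * r + 2) * betaModeMoment a b (2 * r) := by
  have ha0 : 0 < a := by linarith
  have hmode : (a + b) * betaMode a b - a = betaMode a b - 1 := by
    have : betaMode a b * (a + b - 1) = a - 1 := div_mul_cancel₀ _ (by linarith)
    linarith
  have hderiv : ∀ p : ℝ, HasDerivAt (fun p => (p / betaMode a b - 1) ^ (2 * r + 1))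
      ((2 * r + 1) * (p / betaMode a b - 1) ^ (2 * r) / betaMode a b) p := fun p =>
    ((((hasDerivAt_id p).div_const _).sub_const 1).pow (2 * r + 1)).congr_deriv
      (by push_cast [Nat.add_sub_cancel, id]; ring)
  have hstein := integral_stein_betaMeasure ha0 hb hderiv (by fun_prop)
  have hint {f : ℝ → ℝ} (hf : Continuous f) : Integrable f (betaMeasure a b) :=
    integrable_betaMeasure_of_continuous ha0 hb hf
  rw [← sub_nonneg, ← sub_eq_zero.mpr hstein, betaModeMoment, betaModeMoment,
    ← integral_sub (hint (by fun_prop)) (hint (by fun_prop)), ← integral_const_mul,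
    ← integral_const_mul, ← integral_sub (hint (by fun_prop)) (hint (by fun_prop))]
  refine integral_mono_ae (hint (by fun_prop)) (hint (by fun_prop)) ?_
  filter_upwards [ae_mem_Ioo_betaMeasure a b] with p hp
  exact stein_integrand_le (betaMode_pos ha hb) (betaMode_le_one ha hb) hp.1.le hmode r

theorem exists_betaModeMoment_even_le (r : ℕ) :
    ∃ C : ℝ, ∀ a b : ℝ, 2 * (r + 1) ≤ a → 0 < b →
      betaModeMoment a b (2 * r) ≤ C / a ^ r := by
  induction r with
  | zero =>
    refine ⟨1, fun a b ha hb => ?_⟩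
    have := isProbabilityMeasureBeta (show 0 < a by norm_num at ha; linarith) hb
    simp [betaModeMoment]
  | succ r ih =>
    obtain ⟨C, hmoment⟩ := ih
    refine ⟨2 * (3 * r + 2) * C, fun a b ha hb => ?_⟩
    push_cast at ha
    have ha1 : 1 < a := by linarith [r.cast_nonneg (α := ℝ)]
    have : 0 < a := zero_lt_one.trans ha1
    have hrec := betaModeMoment_even_succ_le ha1 hb r
    calc betaModeMoment a b (2 * (r + 1))
        = 2 / a * (a / 2 * betaModeMoment a b (2 * (r + 1))) := by field_simp
      _ ≤ 2 / a * ((a - r - 2) * betaModeMoment a b (2 * (r + 1))) := by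
          gcongr
          · exact betaModeMoment_even_nonneg a b (r + 1)
          · linarith
      _ ≤ 2 / a * ((3 * r + 2) * (C / a ^ r)) := by
          gcongr 2 / a * ?_
          exact hrec.trans (by gcongr; exact hmoment a b (by linarith) hb)
      _ = 2 * (3 * r + 2) * C / a ^ (r + 1) := by field_simp; ring

end Mode

section Fluctuations

open ProbabilityTheory Set

theorem abs_rpow_sub_one_pow_le {t L : ℝ} (ht : 0 < t) (hL : 0 < L) (s : ℝ) (q : ℕ) :
    |t ^ s - 1| ^ q ≤ |s| ^ q * (L * (t - 1) ^ (2 * q) +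
      2 ^ (2 * q) * (1 + t ^ ((s - 1) * (2 * q : ℕ))) / L) := by
  have hyoung := one_add_mul_pow_le hL (abs_nonneg (t - 1)) (Real.rpow_nonneg ht.le (s - 1)) q
  rw [(even_two_mul q).pow_abs, ← Real.rpow_mul_natCast ht.le] at hyoung
  calc |t ^ s - 1| ^ q
      ≤ (|s| * (1 + t ^ (s - 1)) * |t - 1|) ^ q := by gcongr; exact abs_rpow_sub_one_le ht s
    _ = |s| ^ q * ((1 + t ^ (s - 1)) * |t - 1|) ^ q := by rw [mul_assoc, mul_pow]
    _ ≤ _ := by gcongr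

theorem integrable_and_integral_abs_div_betaMode_rpow_sub_one_pow_le {a b L s : ℝ} {q : ℕ}
    (ha : 1 < a) (hb : 0 < b) (hL : 0 < L) (hs : 0 < a + (s - 1) * (2 * q : ℕ)) :
    Integrable (fun p => |(p / betaMode a b) ^ s - 1| ^ q) (betaMeasure a b) ∧
      ∫ p, |(p / betaMode a b) ^ s - 1| ^ q ∂betaMeasure a b ≤
        |s| ^ q * (L * betaModeMoment a b (2 * q) + 2 ^ (2 * q) *
          (1 + ∫ p, (p / betaMode a b) ^ ((s - 1) * (2 * q : ℕ)) ∂betaMeasure a b) / L) := by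
  have ha0 : 0 < a := by linarith
  have hx := betaMode_pos ha hb
  have := isProbabilityMeasureBeta ha0 hb
  have hint_moment : Integrable (fun p => (p / betaMode a b - 1) ^ (2 * q)) (betaMeasure a b) :=
    integrable_betaMeasure_of_continuous ha0 hb (by fun_prop)
  have hint_rpow := integrable_div_rpow_betaMeasure hx.le ha0 hb hs
  have hint_left := hint_moment.const_mul L
  have hint_sum : Integrable (fun p => 1 + (p / betaMode a b) ^ ((s - 1) * (2 * q : ℕ)))
    (betaMeasure a b) := (integrable_const 1).add hint_rpow
  have hint_right := (hint_sum.const_mul (2 ^ (2 * q))).div_const L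
  have hint := (hint_left.add hint_right).const_mul (|s| ^ q)
  have hpointwise : ∀ᵐ p ∂betaMeasure a b, |(p / betaMode a b) ^ s - 1| ^ q ≤ |s| ^ q *
      (L * (p / betaMode a b - 1) ^ (2 * q) +
        2 ^ (2 * q) * (1 + (p / betaMode a b) ^ ((s - 1) * (2 * q : ℕ))) / L) := by
    filter_upwards [ae_mem_Ioo_betaMeasure a b] with p hp
    exact abs_rpow_sub_one_pow_le (div_pos hp.1 hx) hL s q
  constructor
  · have hmeas : Measurable fun p : ℝ => (p / betaMode a b) ^ s - 1 := by fun_prop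
    refine hint.mono' (hmeas.norm.pow_const q).aestronglyMeasurable ?_
    filter_upwards [hpointwise] with p hp
    rwa [Real.norm_of_nonneg (by positivity)]
  · refine (integral_mono_of_nonneg (.of_forall fun _ => by positivity) hint hpointwise).trans_eq ?_
    simp only [Pi.add_apply]
    rw [integral_const_mul, integral_add hint_left hint_right, integral_const_mul, integral_div,
      integral_const_mul, integral_add (integrable_const 1) hint_rpow, integral_const,
      probReal_univ, one_smul, betaModeMoment]

theorem exists_integral_abs_div_betaMode_rpow_sub_one_pow_le (s : ℝ) (q : ℕ) :
    ∃ C K : ℝ, ∀ a b : ℝ, K ≤ a → 0 < b →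
      Integrable (fun p => |(p / betaMode a b) ^ s - 1| ^ q) (betaMeasure a b) ∧
      ∫ p, |(p / betaMode a b) ^ s - 1| ^ q ∂betaMeasure a b ≤ C / √a ^ q := by
  set u : ℝ := (s - 1) * (2 * q : ℕ)
  obtain ⟨C₁, hmoment⟩ := exists_betaModeMoment_even_le q
  obtain ⟨C₂, K, hrpow⟩ := exists_integral_div_betaMode_rpow_le u
  refine ⟨|s| ^ q * (C₁ + 2 ^ (2 * q) * (1 + C₂)), max (max K (|u| + 1)) (2 * (q + 1)),
    fun a b ha hb => ?_⟩
  obtain ⟨⟨haK, hau⟩, haq⟩ := (max_le_iff.trans (and_congr_left' max_le_iff)).mp ha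
  have ha1 : 1 < a := by linarith [q.cast_nonneg (α := ℝ)]
  -- This weight balances the two terms of Young's inequality.
  set L := √a ^ q with hL
  have hL0 : 0 < L := by positivity
  have hLsq : a ^ q = L * L := by rw [hL, ← mul_pow, Real.mul_self_sqrt (by linarith)]
  obtain ⟨hint, hle⟩ := integrable_and_integral_abs_div_betaMode_rpow_sub_one_pow_le ha1 hb hL0
    (by linarith [neg_abs_le u] : 0 < a + u)
  refine ⟨hint, hle.trans ?_⟩
  calc |s| ^ q * (L * betaModeMoment a b (2 * q) +
          2 ^ (2 * q) * (1 + ∫ p, (p / betaMode a b) ^ u ∂betaMeasure a b) / L)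
      ≤ |s| ^ q * (L * (C₁ / a ^ q) + 2 ^ (2 * q) * (1 + C₂) / L) := by
        gcongr
        · exact hmoment a b haq hb
        · exact hrpow a b haK hb
    _ = |s| ^ q * (C₁ + 2 ^ (2 * q) * (1 + C₂)) / L := by
        rw [hLsq]
        field_simp

theorem exists_abs_integral_div_betaMode_rpow_sub_one_le (s : ℝ) :
    ∃ C K : ℝ, ∀ a b : ℝ, K ≤ a → 0 < b →
      |∫ p, (p / betaMode a b) ^ s ∂betaMeasure a b - 1| ≤ C / √a := by
  obtain ⟨C, K, hdev⟩ := exists_integral_abs_div_betaMode_rpow_sub_one_pow_le s 1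
  refine ⟨C, max K (|s| + 2), fun a b ha hb => ?_⟩
  obtain ⟨haK, has⟩ := max_le_iff.mp ha
  have ha1 : 1 < a := by linarith [abs_nonneg s]
  have := isProbabilityMeasureBeta (zero_lt_one.trans ha1) hb
  have hint := integrable_div_rpow_betaMeasure (s := s) (betaMode_pos ha1 hb).le
    (zero_lt_one.trans ha1) hb (by linarith [neg_abs_le s])
  calc |∫ p, (p / betaMode a b) ^ s ∂betaMeasure a b - 1|
      = |∫ p, ((p / betaMode a b) ^ s - 1) ∂betaMeasure a b| := by
        rw [integral_sub hint (integrable_const 1), integral_const]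
        simp
    _ ≤ ∫ p, |(p / betaMode a b) ^ s - 1| ∂betaMeasure a b := abs_integral_le_integral_abs
    _ ≤ C / √a := by simpa using (hdev a b haK hb).2

theorem exists_abs_div_betaMode_rpow_sub_integral_le (s : ℝ) :
    ∃ C K : ℝ, 0 < C ∧ ∀ a b p ε : ℝ, K ≤ a → 0 < b → |p / betaMode a b - 1| ≤ ε → ε ≤ 1 / 2 →
      |(p / betaMode a b) ^ s - ∫ y, (y / betaMode a b) ^ s ∂betaMeasure a b| ≤
        C * (ε + 1 / √a) := by
  obtain ⟨C, K, hmean⟩ := exists_abs_integral_div_betaMode_rpow_sub_one_le s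
  set A := |s| * (1 + 2 ^ |s - 1|) with hA
  refine ⟨A + |C| + 1, K, by positivity, fun a b p ε ha hb hp hε => ?_⟩
  set t := p / betaMode a b
  have hε0 : 0 ≤ ε := (abs_nonneg _).trans hp
  have ht : 0 < t := by linarith [(abs_le.mp hp).1]
  have hpoint : |t ^ s - 1| ≤ A * ε := by
    refine (abs_rpow_sub_one_le ht s).trans ?_
    rw [hA]
    gcongr
    exact rpow_le_two_rpow_abs (hp.trans hε) _
  have hmean' : |1 - ∫ y, (y / betaMode a b) ^ s ∂betaMeasure a b| ≤ |C| * (1 / √a) := by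
    rw [abs_sub_comm, mul_one_div]
    exact (hmean a b ha hb).trans (by gcongr; exact le_abs_self C)
  calc |t ^ s - ∫ y, (y / betaMode a b) ^ s ∂betaMeasure a b|
      ≤ A * ε + |C| * (1 / √a) := (abs_sub_le _ 1 _).trans (add_le_add hpoint hmean')
    _ ≤ (A + |C| + 1) * ε + (A + |C| + 1) * (1 / √a) := by
        gcongr
        · linarith [abs_nonneg C]
        · linarith [show 0 ≤ A by positivity]
    _ = (A + |C| + 1) * (ε + 1 / √a) := by ring

theorem exists_integral_abs_div_betaMode_rpow_sub_integral_pow_le (s : ℝ) (q : ℕ) :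
    ∃ C K : ℝ, ∀ a b : ℝ, K ≤ a → 0 < b →
      ∫ p, |(p / betaMode a b) ^ s - ∫ y, (y / betaMode a b) ^ s ∂betaMeasure a b| ^ q
        ∂betaMeasure a b ≤ C / √a ^ q := by
  obtain ⟨C₁, K₁, hmean⟩ := exists_abs_integral_div_betaMode_rpow_sub_one_le s
  obtain ⟨C, K, hdev⟩ := exists_integral_abs_div_betaMode_rpow_sub_one_pow_le s q
  refine ⟨2 ^ (q - 1) * (C + C₁ ^ q), max (max K K₁) 1, fun a b ha hb => ?_⟩
  obtain ⟨⟨haK, haK₁⟩, ha1⟩ := (max_le_iff.trans (and_congr_left' max_le_iff)).mp ha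
  have := isProbabilityMeasureBeta (zero_lt_one.trans_le ha1) hb
  obtain ⟨hint, hdev⟩ := hdev a b haK hb
  specialize hmean a b haK₁ hb
  set E := ∫ y, (y / betaMode a b) ^ s ∂betaMeasure a b
  have hpointwise (p : ℝ) : |(p / betaMode a b) ^ s - E| ^ q ≤
      2 ^ (q - 1) * (|(p / betaMode a b) ^ s - 1| ^ q + (C₁ / √a) ^ q) := by
    refine le_trans ?_ (add_pow_le (abs_nonneg _) ((abs_nonneg _).trans hmean) q)
    gcongr
    refine (abs_sub_le _ 1 _).trans ?_
    gcongr
    rwa [abs_sub_comm]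
  calc ∫ p, |(p / betaMode a b) ^ s - E| ^ q ∂betaMeasure a b
      ≤ ∫ p, 2 ^ (q - 1) * (|(p / betaMode a b) ^ s - 1| ^ q + (C₁ / √a) ^ q) ∂betaMeasure a b :=
        integral_mono_of_nonneg (.of_forall fun _ => by positivity)
          ((hint.add (integrable_const _)).const_mul _) (.of_forall hpointwise)
    _ = 2 ^ (q - 1) * (∫ p, |(p / betaMode a b) ^ s - 1| ^ q ∂betaMeasure a b +
          (C₁ / √a) ^ q) := by
        rw [integral_const_mul, integral_add hint (integrable_const _), integral_const]
        simp
    _ ≤ 2 ^ (q - 1) * (C / √a ^ q + (C₁ / √a) ^ q) := by gcongr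
    _ = 2 ^ (q - 1) * (C + C₁ ^ q) / √a ^ q := by rw [div_pow]; ring

end Fluctuations

section BetaError

open ProbabilityTheory Set

/-- The random variable `E_β = ((k - 1) / M) ^ β * (P ^ (-β) - E[P ^ (-β)])` of the paper at the
sample `P = p`, where `P ~ Beta(k, M - k + 1)`. The parameters `k` and `M` are allowed to be
real. -/
noncomputable def betaError (k M β p : ℝ) : ℝ :=
  ((k - 1) / M) ^ β * (p ^ (-β) - ∫ y, y ^ (-β) ∂betaMeasure k (M - k + 1))

theorem betaMode_sub_add_one (k M : ℝ) : betaMode k (M - k + 1) = (k - 1) / M := by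
  rw [betaMode]
  ring_nf

theorem betaError_eq_gamma {k M β : ℝ} (hk : 0 < k) (hkM : k ≤ M) (hβ : β < k) :
    betaError k M β = fun p => ((k - 1) / M) ^ β * (p ^ (-β) -
      Real.Gamma (k - β) * Real.Gamma (M + 1) / (Real.Gamma k * Real.Gamma (M + 1 - β))) := by
  have hb : 0 < M - k + 1 := by linarith
  have hGb := (Real.Gamma_pos_of_pos hb).ne'
  ext p
  rw [betaError, integral_rpow_betaMeasure hk hb (by linarith), beta, beta,
    show k + -β + (M - k + 1) = M + 1 - β by ring, show k + (M - k + 1) = M + 1 by ring,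
    ← sub_eq_add_neg]
  field_simp

theorem betaError_eq_div_betaMode {k M p : ℝ} (hk : 1 < k) (hkM : k ≤ M) (hp : 0 < p) (β : ℝ) :
    betaError k M β p = (p / betaMode k (M - k + 1)) ^ (-β) -
      ∫ y, (y / betaMode k (M - k + 1)) ^ (-β) ∂betaMeasure k (M - k + 1) := by
  have hx := betaMode_pos hk (by linarith : 0 < M - k + 1)
  rw [integral_congr_ae (div_rpow_ae_eq_betaMeasure hx.le _ _ _), integral_div,
    Real.div_rpow hp.le hx.le, Real.rpow_neg hx.le, div_inv_eq_mul, div_inv_eq_mul, ← sub_mul,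
    mul_comm, betaMode_sub_add_one, betaError]

theorem setIntegral_mul_pow_mul_one_sub_pow {k M : ℕ} (hk : 1 ≤ k) (hkM : k ≤ M) (f : ℝ → ℝ) :
    ∫ p in Ioo 0 1, f p * (p ^ (k - 1) * (1 - p) ^ (M - k) *
        (Real.Gamma (M + 1) / (Real.Gamma k * Real.Gamma (M - k + 1)))) =
      ∫ p, f p ∂betaMeasure k (M - k + 1) := by
  have hk0 : (0 : ℝ) < k := mod_cast hk
  have hb : (0 : ℝ) < M - k + 1 := by linarith [(Nat.cast_le (α := ℝ)).mpr hkM]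
  rw [integral_betaMeasure hk0 hb]
  refine setIntegral_congr_fun measurableSet_Ioo fun p _ => ?_
  rw [beta, add_sub_cancel_right, ← Nat.cast_sub hkM, Real.rpow_natCast, ← Nat.cast_pred hk,
    Real.rpow_natCast, Nat.cast_sub hkM, show (k : ℝ) + (M - k + 1) = M + 1 by ring]
  field_simp

variable {ι : Type*} {l : Filter ι} {k M : ι → ℝ} {δ : ℝ}

theorem exists_eventually_abs_betaError_le (hkM : ∀ i, k i ≤ M i) (hk : Tendsto k l atTop)
    (hδ : δ ∈ Ioc 0 1) (β : ℝ) :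
    ∃ C : ℝ, 0 < C ∧ ∀ᶠ i in l, ∀ p : ℝ,
      (1 - √6 / k i ^ (δ / 2)) * (k i - 1) / M i < p →
      p < (1 + √6 / k i ^ (δ / 2)) * (k i - 1) / M i →
      |betaError (k i) (M i) β p| ≤ C * k i ^ (-δ / 2) := by
  obtain ⟨C, K, hC, hdev⟩ := exists_abs_div_betaMode_rpow_sub_integral_le (-β)
  refine ⟨C * (√6 + 1), by positivity, ?_⟩
  have hwidth : Tendsto (fun i => √6 / k i ^ (δ / 2)) l (nhds 0) :=
    ((tendsto_rpow_atTop (half_pos hδ.1)).comp hk).const_div_atTop _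
  filter_upwards [hk.eventually_ge_atTop K, hk.eventually_gt_atTop 1,
    hwidth.eventually_le_const one_half_pos] with i hK hk1 hhalf p hlo hhi
  have hb : 0 < M i - k i + 1 := by linarith [hkM i]
  have hx := betaMode_pos hk1 hb
  rw [mul_div_assoc, ← betaMode_sub_add_one, ← lt_div_iff₀ hx] at hlo
  rw [mul_div_assoc, ← betaMode_sub_add_one, ← div_lt_iff₀ hx] at hhi
  have hp : 0 < p := (div_pos_iff_of_pos_right hx).mp (by linarith)
  have hclose : |p / betaMode (k i) (M i - k i + 1) - 1| ≤ √6 / k i ^ (δ / 2) :=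
    abs_le.mpr ⟨by linarith, by linarith⟩
  rw [betaError_eq_div_betaMode hk1 (hkM i) hp]
  calc _ ≤ C * (√6 / k i ^ (δ / 2) + 1 / √(k i)) := hdev _ _ _ _ hK hb hclose hhalf
    _ ≤ C * (√6 * k i ^ (-δ / 2) + k i ^ (-δ / 2)) := by
        rw [div_eq_mul_inv, ← Real.rpow_neg (by linarith), ← neg_div]
        gcongr
        exact one_div_sqrt_le_rpow_neg_div_two hk1.le hδ.2
    _ = C * (√6 + 1) * k i ^ (-δ / 2) := by ring

theorem isBigO_integral_betaError_pow (hkM : ∀ i, k i ≤ M i) (hk : Tendsto k l atTop)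
    (hδ : δ ≤ 1) (β : ℝ) (q : ℕ) :
    (fun i => ∫ p, betaError (k i) (M i) β p ^ q ∂betaMeasure (k i)
      (M i - k i + 1)) =O[l] fun i => k i ^ (-δ * q / 2) := by
  obtain ⟨C, K, hdev⟩ := exists_integral_abs_div_betaMode_rpow_sub_integral_pow_le (-β) q
  refine .of_bound |C| ?_
  filter_upwards [hk.eventually_ge_atTop K, hk.eventually_gt_atTop 1] with i hK hk1
  have hb : 0 < M i - k i + 1 := by linarith [hkM i]
  have hk0 : 0 < k i := by linarith
  calc ‖∫ p, betaError (k i) (M i) β p ^ q ∂betaMeasure (k i) (M i - k i + 1)‖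
      ≤ ∫ p, ‖betaError (k i) (M i) β p ^ q‖ ∂betaMeasure (k i)
          (M i - k i + 1) := norm_integral_le_integral_norm _
    _ ≤ C / √(k i) ^ q := by
        refine (integral_congr_ae ?_).trans_le (hdev _ _ hK hb)
        filter_upwards [ae_mem_Ioo_betaMeasure _ _] with p hp
        rw [norm_pow, Real.norm_eq_abs, betaError_eq_div_betaMode hk1 (hkM i) hp.1]
    _ ≤ |C| * (1 / √(k i)) ^ q := by
        rw [one_div_pow, mul_one_div]
        gcongr
        exact le_abs_self C
    _ ≤ |C| * (k i ^ (-δ / 2)) ^ q := by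
        gcongr
        exact one_div_sqrt_le_rpow_neg_div_two hk1.le hδ
    _ = |C| * ‖k i ^ (-δ * q / 2)‖ := by
        rw [← Real.rpow_mul_natCast hk0.le, div_mul_eq_mul_div,
          Real.norm_of_nonneg (Real.rpow_nonneg hk0.le _)]

theorem stmt17_general (hkM : ∀ i, k i ≤ M i) (hk : Tendsto k l atTop) (hδ : δ ∈ Ioc 0 1)
    (β : ℝ) (q : ℕ) :
    (∃ C : ℝ, 0 < C ∧ ∀ᶠ i in l, ∀ p : ℝ,
        (1 - √6 / k i ^ (δ / 2)) * (k i - 1) / M i < p →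
        p < (1 + √6 / k i ^ (δ / 2)) * (k i - 1) / M i →
        |betaError (k i) (M i) β p| ≤ C * k i ^ (-δ / 2)) ∧
    (fun i => ∫ p, betaError (k i) (M i) β p ^ q ∂betaMeasure (k i)
      (M i - k i + 1)) =O[l] fun i => k i ^ (-δ * q / 2) :=
  ⟨exists_eventually_abs_betaError_le hkM hk hδ β, isBigO_integral_betaError_pow hkM hk hδ.2 β q⟩

end BetaError

/-- Let `P ~ Beta(k, M-k+1)`, `δ ∈ (2/3, 1)`, `p_k = √6/k^{δ/2}`, and
`E_β = ((k-1)/M)^β (P^{-β} - E[P^{-β}])` with `0 < qβ < k`.  Then on the event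
`(1-p_k)(k-1)/M < P < (1+p_k)(k-1)/M` one has `|E_β| = O(k^{-δ/2})` deterministically, and
`E[E_β^q] = O(k^{-δq/2}) + O(e^{-3k^{1-δ}})`. -/
theorem stmt17 (δ : ℝ) (hδ : δ ∈ Set.Ioo (2/3 : ℝ) 1)
    (k M : ℕ → ℕ) (hkM : ∀ n, k n ≤ M n) (hk3 : ∀ n, 3 ≤ k n)
    (hk : Tendsto (fun n => (k n : ℝ)) atTop atTop)
    (β : ℝ) (hβ : 0 < β) (q : ℕ) (hq : 0 < q) (hqβ : ∀ n, (q : ℝ) * β < k n) :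
    let m : ℕ → ℝ := fun n =>
      Real.Gamma ((k n : ℝ) - β) * Real.Gamma ((M n : ℝ) + 1) /
        (Real.Gamma ((k n : ℝ)) * Real.Gamma ((M n : ℝ) + 1 - β))
    let Eβ : ℕ → ℝ → ℝ := fun n p => (((k n : ℝ) - 1) / M n) ^ β * (p ^ (-β) - m n)
    let pk : ℕ → ℝ := fun n => Real.sqrt 6 / (k n : ℝ) ^ (δ / 2)
    let pdf : ℕ → ℝ → ℝ := fun n p =>
      p ^ (k n - 1) * (1 - p) ^ (M n - k n) *
        (Real.Gamma ((M n : ℝ) + 1) /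
          (Real.Gamma ((k n : ℝ)) * Real.Gamma ((M n : ℝ) - k n + 1)))
    (∃ C : ℝ, 0 < C ∧ ∀ᶠ n in atTop, ∀ p : ℝ,
        (1 - pk n) * ((k n : ℝ) - 1) / M n < p → p < (1 + pk n) * ((k n : ℝ) - 1) / M n →
        |Eβ n p| ≤ C * (k n : ℝ) ^ (-δ / 2)) ∧
    (fun n => ∫ p in Set.Ioo (0:ℝ) 1, (Eβ n p) ^ q * pdf n p)
      =O[atTop]
        (fun n => (k n : ℝ) ^ (-δ * q / 2) + Real.exp (-3 * (k n : ℝ) ^ (1 - δ))) := by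
  intro m Eβ pk pdf
  have hβk (n : ℕ) : β < k n := (le_mul_of_one_le_left hβ.le (mod_cast hq)).trans_lt (hqβ n)
  have hE (n : ℕ) : Eβ n = betaError (k n) (M n) β :=
    (betaError_eq_gamma (Nat.cast_pos.mpr (by linarith [hk3 n])) (mod_cast hkM n) (hβk n)).symm
  have hpdf (n : ℕ) (f : ℝ → ℝ) := setIntegral_mul_pow_mul_one_sub_pow
    (by linarith [hk3 n]) (hkM n) f
  obtain ⟨hdet, hmom⟩ := stmt17_general (fun n => Nat.cast_le.mpr (hkM n)) hk
    ⟨by linarith [hδ.1], hδ.2.le⟩ β q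
  simp only [hE, pdf, hpdf]
  refine ⟨hdet, hmom.trans (.of_norm_le fun n => ?_)⟩
  rw [Real.norm_of_nonneg (by positivity)]
  exact le_add_of_nonneg_right (Real.exp_nonneg _)
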